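/- (Stability of product against fast oscillations in $L^p$.) Fix integers $N, \kappa \geq 1$ and let $\zeta > 1$ be such that $\frac{2\pi\sqrt{3}\zeta}{\kappa} \leq \frac{1}{3}$ and $\zeta^4 \frac{(2\pi\sqrt{3}\zeta)^N}{\kappa^N} \leq 1$. Let $p \in \{1,2\}$ and let $f$ be a $\mathbb{T}^3$-periodic function such that there is $C_f > 0$ with $\|D^j f\|_{L^p} \leq C_f \zeta^j$ for all $0 \leq j \leq N+4$. Let $g$ be a $(\mathbb{T}/\kappa)^3$-periodic function. Then $\|fg\|_{L^p(\mathbb{T}^3)} \lesssim C_f \|g\|_{L^p(\mathbb{T}^3)}$, with a universal implicit constant. -/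

import Mathlib

/-!
Write `a = 2π/κ` and cut the torus into `κ³` half-open tiles of side `a`. By the fundamental
theorem of calculus, a `C¹` function `φ` on an interval `I` of length `a` satisfies
`|φ(x)| ≤ |φ(t)| + ∫_I |φ'|` for all `x, t ∈ I`; averaging in `t` and using Jensen's inequality,
`a |φ(x)|^p ≤ 2 (∫_I |φ|^p + a^p ∫_I |φ'|^p)` for `1 ≤ p ≤ 2` (`one_dim_bound`).
Applying this once in each of the three coordinates bounds the supremum of `f` on a tile `T` by
averages of at most three derivatives (`tile_sup_bound`):
`a³ sup_T |f|^p ≤ 64 ∫_T W`, where `W = ∑_{k ≤ 3} a^{pk} |D^k f|^p`.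

Since `g` is `a`-periodic, `∫_T |g|^p` is the same number `κ⁻³ ∫ |g|^p` for every tile, so
`∫_T |f g|^p ≤ sup_T |f|^p ∫_T |g|^p` sums over the tiles to
`(2π)³ ∫ |f g|^p ≤ 64 ∫ |g|^p ∫ W` (`torus_bound`). The hypothesis on the derivatives of `f` gives
`∫ W ≤ ∑_{k ≤ 3} (C_f (aζ)^k)^p ≤ 4 C_f^p`, because `aζ ≤ 1`. The gain over iterating a Poincaré
inequality is that the mixed third-order bound on each tile already has constants independent of
`κ`, at the natural scale `a`.
-/

open Real MeasureTheory

/-- the fundamental domain `[0,2π]³` of the torus `𝕋³ = (ℝ/2πℤ)³` -/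
noncomputable def cube3 : Set (Fin 3 → ℝ) := Set.univ.pi fun _ => Set.Icc 0 (2 * Real.pi)

open scoped ENNReal

/-! ### Pointwise bounds by local averages -/

/-- One-dimensional Sobolev bound on an interval of length `a`, at the scale of the interval. -/
lemma one_dim_bound {E : Type*} [NormedAddCommGroup E] [NormedSpace ℝ E] [CompleteSpace E]
    {φ ψ : ℝ → E} (hφ : ∀ t, HasDerivAt φ (ψ t) t) (hψ : Continuous ψ)
    {p : ℝ} (hp1 : 1 ≤ p) (hp2 : p ≤ 2) {c a : ℝ} {x : ℝ}
    (hx : x ∈ Set.Ico c (c + a)) :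
    ENNReal.ofReal a * ‖φ x‖ₑ ^ p ≤
      2 * ∫⁻ t in Set.Ico c (c + a),
        (‖φ t‖ₑ ^ p + ENNReal.ofReal a ^ p * ‖ψ t‖ₑ ^ p) := by
  set α := ENNReal.ofReal a with hα
  have hp0 : 0 < p := by linarith
  have hφc : Continuous φ := continuous_iff_continuousAt.2 fun t => (hφ t).continuousAt
  set μ := (volume : Measure ℝ).restrict (Set.Ico c (c + a)) with hμ
  have hμu : μ Set.univ = α := by simp [hμ, hα]
  have hμI : (volume : Measure ℝ).restrict (Set.Icc c (c + a)) = μ :=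
    (Measure.restrict_congr_set Ico_ae_eq_Icc).symm
  have h2 : ∀ u v : ℝ≥0∞, (u + v) ^ p ≤ 2 * (u ^ p + v ^ p) := by
    intro u v
    refine (ENNReal.rpow_add_le_mul_rpow_add_rpow u v hp1).trans ?_
    gcongr
    calc (2 : ℝ≥0∞) ^ (p - 1) ≤ 2 ^ (1 : ℝ) :=
          ENNReal.rpow_le_rpow_of_exponent_le (by norm_num) (by linarith)
      _ = 2 := by simp
  have hpt : ∀ t ∈ Set.Ico c (c + a), ‖φ x‖ₑ ≤ ‖φ t‖ₑ + ∫⁻ s, ‖ψ s‖ₑ ∂μ := by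
    intro t ht
    have h := intervalIntegral.integral_eq_sub_of_hasDerivAt (a := t) (b := x)
      (fun s _ => hφ s) (hψ.intervalIntegrable _ _)
    have hle : ‖φ x - φ t‖ₑ ≤ ∫⁻ s, ‖ψ s‖ₑ ∂μ := by
      rw [← h, ← ofReal_norm, intervalIntegral.norm_intervalIntegral_eq,
        ofReal_norm]
      refine (enorm_integral_le_lintegral_enorm _).trans ?_
      rw [← hμI]
      refine lintegral_mono_set ?_
      refine Set.uIoc_subset_uIcc.trans ?_
      exact Set.uIcc_subset_Icc (Set.Ico_subset_Icc_self ht) (Set.Ico_subset_Icc_self hx)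
    calc ‖φ x‖ₑ = ‖φ t + (φ x - φ t)‖ₑ := by congr 1; abel
      _ ≤ ‖φ t‖ₑ + ‖φ x - φ t‖ₑ := enorm_add_le _ _
      _ ≤ _ := by gcongr
  -- Jensen's inequality on the interval
  have hJ : α * (∫⁻ s, ‖ψ s‖ₑ ∂μ) ^ p ≤ α ^ p * ∫⁻ s, ‖ψ s‖ₑ ^ p ∂μ := by
    have h := eLpNorm'_le_eLpNorm'_mul_rpow_measure_univ (μ := μ) one_pos hp1
      hψ.aestronglyMeasurable
    simp only [eLpNorm', ENNReal.rpow_one, div_one, hμu] at h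
    have h' := ENNReal.rpow_le_rpow h hp0.le
    rw [ENNReal.mul_rpow_of_nonneg _ _ hp0.le, ← ENNReal.rpow_mul, ← ENNReal.rpow_mul,
      one_div_mul_cancel hp0.ne', ENNReal.rpow_one,
      show (1 - 1 / p) * p = p - 1 by field_simp] at h'
    calc α * (∫⁻ s, ‖ψ s‖ₑ ∂μ) ^ p
        ≤ α * ((∫⁻ s, ‖ψ s‖ₑ ^ p ∂μ) * α ^ (p - 1)) := by gcongr
      _ = (α ^ (1 : ℝ) * α ^ (p - 1)) * ∫⁻ s, ‖ψ s‖ₑ ^ p ∂μ := by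
          rw [ENNReal.rpow_one]; ring
      _ = _ := by
          rw [← ENNReal.rpow_add_of_nonneg _ _ zero_le_one (by linarith)]
          congr 2; ring
  have hm1 : Measurable fun t => ‖φ t‖ₑ ^ p := by
    have := hφc.enorm.measurable
    fun_prop
  calc α * ‖φ x‖ₑ ^ p = ∫⁻ _, ‖φ x‖ₑ ^ p ∂μ := by
        rw [lintegral_const, hμu, mul_comm]
    _ ≤ ∫⁻ t, 2 * (‖φ t‖ₑ ^ p + (∫⁻ s, ‖ψ s‖ₑ ∂μ) ^ p) ∂μ := by
        refine setLIntegral_mono' measurableSet_Ico fun t ht => ?_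
        exact (ENNReal.rpow_le_rpow (hpt t ht) hp0.le).trans (h2 _ _)
    _ = 2 * (∫⁻ t, ‖φ t‖ₑ ^ p ∂μ + α * (∫⁻ s, ‖ψ s‖ₑ ∂μ) ^ p) := by
        rw [lintegral_const_mul' _ _ (by simp), lintegral_add_left hm1, lintegral_const, hμu,
          mul_comm α]
    _ ≤ 2 * (∫⁻ t, ‖φ t‖ₑ ^ p ∂μ + α ^ p * ∫⁻ s, ‖ψ s‖ₑ ^ p ∂μ) := by gcongr
    _ = _ := by
        rw [lintegral_add_left hm1, lintegral_const_mul' _ _ (by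
          exact ENNReal.rpow_ne_top_of_nonneg hp0.le ENNReal.ofReal_ne_top)]

/-- The half-open cube with lowest corner `c` and side `a`. -/
def tile (c : Fin 3 → ℝ) (a : ℝ) : Set (Fin 3 → ℝ) :=
  Set.univ.pi fun i => Set.Ico (c i) (c i + a)

/-- The density `∑_{k ≤ 3} a^{pk} ‖D^k f‖^p`, with values in `[0, ∞]`. -/
noncomputable def sobDensity (p a : ℝ) (f : (Fin 3 → ℝ) → ℝ) (x : Fin 3 → ℝ) : ℝ≥0∞ :=
  ∑ k ∈ Finset.range 4, (ENNReal.ofReal a ^ p) ^ k * ‖iteratedFDeriv ℝ k f x‖ₑ ^ p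

lemma measurable_deriv_rpow {f : (Fin 3 → ℝ) → ℝ} (hf : ContDiff ℝ 4 f) (p : ℝ) {k : ℕ}
    (hk : k < 4) : Measurable fun x => ‖iteratedFDeriv ℝ k f x‖ₑ ^ p := by
  have : Measurable fun x => ‖iteratedFDeriv ℝ k f x‖ₑ :=
    (hf.continuous_iteratedFDeriv (m := k) (by exact_mod_cast hk.le)).enorm.measurable
  fun_prop

lemma measurable_sobDensity {f : (Fin 3 → ℝ) → ℝ} (hf : ContDiff ℝ 4 f) (p a : ℝ) :
    Measurable (sobDensity p a f) := by
  unfold sobDensity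
  refine Finset.measurable_sum _ fun k hk => ?_
  exact (measurable_deriv_rpow hf p (Finset.mem_range.1 hk)).const_mul _

/-- Iterated form of the one-dimensional bound: integrating out the coordinates in `s` costs
`|s|` further derivatives, all of which are recorded in `sobDensity`. -/
lemma marginal_bound {f : (Fin 3 → ℝ) → ℝ} (hf : ContDiff ℝ 4 f) {p : ℝ} (hp1 : 1 ≤ p)
    (hp2 : p ≤ 2) (c : Fin 3 → ℝ) (a : ℝ) (s : Finset (Fin 3)) :
    ∀ m : ℕ, m + s.card ≤ 3 → ∀ x ∈ tile c a,
      ENNReal.ofReal a ^ s.card *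
        ((ENNReal.ofReal a ^ p) ^ m * ‖iteratedFDeriv ℝ m f x‖ₑ ^ p) ≤
      4 ^ s.card * (∫⋯∫⁻_s, sobDensity p a f
        ∂fun i => (volume : Measure ℝ).restrict (Set.Ico (c i) (c i + a))) x := by
  induction s using Finset.induction_on with
  | empty =>
    intro m hm x _
    simp only [Finset.card_empty, pow_zero, one_mul, lmarginal_empty]
    exact Finset.single_le_sum
      (f := fun k => (ENNReal.ofReal a ^ p) ^ k * ‖iteratedFDeriv ℝ k f x‖ₑ ^ p)
      (fun _ _ => zero_le) (Finset.mem_range.2 (by simp at hm; omega))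
  | insert i s hi ih =>
    intro m hm x hx
    rw [Finset.card_insert_of_notMem hi] at hm ⊢
    rw [lmarginal_insert _ (measurable_sobDensity hf p a) hi]
    set α := ENNReal.ofReal a with hα
    set μ := fun i => (volume : Measure ℝ).restrict (Set.Ico (c i) (c i + a)) with hμ
    have hp0 : 0 ≤ p := by linarith
    have hAt : α ^ p ≠ ⊤ := ENNReal.rpow_ne_top_of_nonneg hp0 ENNReal.ofReal_ne_top
    have hdiff : Differentiable ℝ (iteratedFDeriv ℝ m f) :=
      hf.differentiable_iteratedFDeriv (m := m) (by
        have : m < 4 := by omega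
        exact_mod_cast this)
    have hcont : Continuous (fderiv ℝ (iteratedFDeriv ℝ m f)) := by
      have h : ContDiff ℝ 1 (iteratedFDeriv ℝ m f) := hf.iteratedFDeriv_right (by
        have : 1 + m ≤ 4 := by omega
        exact_mod_cast this)
      exact h.continuous_fderiv one_ne_zero
    have hup : Continuous fun t : ℝ => Function.update x i t := by fun_prop
    have hxi : x i ∈ Set.Ico (c i) (c i + a) := hx i (Set.mem_univ i)
    have h1 := one_dim_bound (φ := fun t => iteratedFDeriv ℝ m f (Function.update x i t))
      (ψ := fun t => fderiv ℝ (iteratedFDeriv ℝ m f) (Function.update x i t) (Pi.single i 1))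
      (fun t => (hdiff _).hasFDerivAt.comp_hasDerivAt t (hasDerivAt_update x i t))
      ((hcont.comp hup).clm_apply continuous_const) hp1 hp2 hxi
    simp only [Function.update_eq_self] at h1
    have hψ : ∀ y, ‖fderiv ℝ (iteratedFDeriv ℝ m f) y (Pi.single i 1)‖ₑ ≤
        ‖iteratedFDeriv ℝ (m + 1) f y‖ₑ := by
      intro y
      rw [enorm_le_iff_norm_le, ← norm_fderiv_iteratedFDeriv]
      have h := (fderiv ℝ (iteratedFDeriv ℝ m f) y).le_opNorm (Pi.single i 1)
      rwa [Pi.norm_single, norm_one, mul_one] at h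
    have key : ∀ t ∈ Set.Ico (c i) (c i + a),
        α ^ s.card * ((α ^ p) ^ m * (‖iteratedFDeriv ℝ m f (Function.update x i t)‖ₑ ^ p +
          α ^ p * ‖fderiv ℝ (iteratedFDeriv ℝ m f) (Function.update x i t)
            (Pi.single i 1)‖ₑ ^ p)) ≤
        2 * (4 ^ s.card * (∫⋯∫⁻_s, sobDensity p a f ∂μ) (Function.update x i t)) := by
      intro t ht
      have hmem : Function.update x i t ∈ tile c a := by
        intro j _
        rcases eq_or_ne j i with rfl | hj
        · simpa using ht
        · simpa [hj] using hx j (Set.mem_univ j)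
      have e1 := ih m (by omega) _ hmem
      have e2 := ih (m + 1) (by omega) _ hmem
      calc _ ≤ α ^ s.card * ((α ^ p) ^ m *
              (‖iteratedFDeriv ℝ m f (Function.update x i t)‖ₑ ^ p +
                α ^ p * ‖iteratedFDeriv ℝ (m + 1) f (Function.update x i t)‖ₑ ^ p)) := by
            gcongr
            exact hψ _
        _ = α ^ s.card * ((α ^ p) ^ m *
              ‖iteratedFDeriv ℝ m f (Function.update x i t)‖ₑ ^ p) +
            α ^ s.card * ((α ^ p) ^ (m + 1) *
              ‖iteratedFDeriv ℝ (m + 1) f (Function.update x i t)‖ₑ ^ p) := by ring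
        _ ≤ _ := by rw [two_mul]; exact add_le_add e1 e2
    have hct : α ^ s.card * (α ^ p) ^ m ≠ ⊤ :=
      ENNReal.mul_ne_top (ENNReal.pow_ne_top ENNReal.ofReal_ne_top) (ENNReal.pow_ne_top hAt)
    calc α ^ (s.card + 1) * ((α ^ p) ^ m * ‖iteratedFDeriv ℝ m f x‖ₑ ^ p)
        = (α ^ s.card * (α ^ p) ^ m) * (α * ‖iteratedFDeriv ℝ m f x‖ₑ ^ p) := by ring
      _ ≤ (α ^ s.card * (α ^ p) ^ m) * (2 * _) := by gcongr
      _ = 2 * ∫⁻ t, α ^ s.card * ((α ^ p) ^ m *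
            (‖iteratedFDeriv ℝ m f (Function.update x i t)‖ₑ ^ p +
            α ^ p * ‖fderiv ℝ (iteratedFDeriv ℝ m f) (Function.update x i t)
              (Pi.single i 1)‖ₑ ^ p)) ∂μ i := by
          rw [mul_left_comm, ← lintegral_const_mul' _ _ hct]
          simp only [mul_assoc, hμ, hα]
      _ ≤ 2 * ∫⁻ t, 2 * (4 ^ s.card *
            (∫⋯∫⁻_s, sobDensity p a f ∂μ) (Function.update x i t)) ∂μ i := by
          gcongr 2 * ?_
          exact setLIntegral_mono' measurableSet_Ico key
      _ = _ := by
          rw [lintegral_const_mul' _ _ (by simp), lintegral_const_mul' _ _ (by simp)]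
          ring

/-- The supremum of `|f|^p` over a tile is controlled by the average of `sobDensity`. -/
lemma tile_sup_bound {f : (Fin 3 → ℝ) → ℝ} (hf : ContDiff ℝ 4 f) {p : ℝ} (hp1 : 1 ≤ p)
    (hp2 : p ≤ 2) (c : Fin 3 → ℝ) (a : ℝ) {x : Fin 3 → ℝ} (hx : x ∈ tile c a) :
    ENNReal.ofReal a ^ 3 * ‖f x‖ₑ ^ p ≤ 64 * ∫⁻ y in tile c a, sobDensity p a f y := by
  have h := marginal_bound hf hp1 hp2 c a Finset.univ 0 (by simp) x hx
  rw [lmarginal_univ, ← Measure.restrict_pi_pi, ← volume_pi] at h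
  have h0 : ‖iteratedFDeriv ℝ 0 f x‖ₑ = ‖f x‖ₑ := by
    rw [← ofReal_norm, norm_iteratedFDeriv_zero, ofReal_norm]
  simp only [Finset.card_univ, Fintype.card_fin, pow_zero, one_mul, h0] at h
  norm_num at h
  exact h

/-! ### Decomposition into tiles -/

lemma measurableSet_tile (c : Fin 3 → ℝ) (a : ℝ) : MeasurableSet (tile c a) :=
  MeasurableSet.univ_pi fun _ => measurableSet_Ico

lemma mem_Ico_mul_iff {a t : ℝ} (ha : 0 < a) (n : ℕ) :
    t ∈ Set.Ico ((n : ℝ) * a) (n * a + a) ↔ 0 ≤ t ∧ ⌊t / a⌋₊ = n := by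
  constructor
  · rintro ⟨h1, h2⟩
    have ht : 0 ≤ t := le_trans (by positivity) h1
    refine ⟨ht, (Nat.floor_eq_iff (by positivity)).2 ⟨?_, ?_⟩⟩
    · rwa [le_div_iff₀ ha]
    · rw [div_lt_iff₀ ha]; linarith
  · rintro ⟨ht, h⟩
    obtain ⟨h1, h2⟩ := (Nat.floor_eq_iff (div_nonneg ht ha.le)).1 h
    rw [le_div_iff₀ ha] at h1
    rw [div_lt_iff₀ ha] at h2
    exact ⟨h1, by linarith⟩

/-- A cube of side `κ a` is cut into `κ³` disjoint tiles of side `a`. -/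
lemma lintegral_tiles {κ : ℕ} {a : ℝ} (ha : 0 < a) (F : (Fin 3 → ℝ) → ℝ≥0∞) :
    ∫⁻ x in tile 0 (κ * a), F x =
      ∑ k : Fin 3 → Fin κ, ∫⁻ x in tile (fun i => ((k i : ℕ) : ℝ) * a) a, F x := by
  have hU : tile 0 (κ * a) = ⋃ k : Fin 3 → Fin κ, tile (fun i => ((k i : ℕ) : ℝ) * a) a := by
    ext x
    simp only [tile, Set.mem_iUnion, Set.mem_univ_pi, mem_Ico_mul_iff ha]
    simp only [Pi.zero_apply, zero_add, Set.mem_Ico]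
    constructor
    · intro h
      have hlt : ∀ i, ⌊x i / a⌋₊ < κ := fun i => by
        rw [Nat.floor_lt (div_nonneg (h i).1 ha.le), div_lt_iff₀ ha]
        exact (h i).2
      exact ⟨fun i => ⟨_, hlt i⟩, fun i => ⟨(h i).1, rfl⟩⟩
    · rintro ⟨k, hk⟩ i
      refine ⟨(hk i).1, ?_⟩
      have := (k i).2
      rw [← (hk i).2, Nat.floor_lt (div_nonneg (hk i).1 ha.le), div_lt_iff₀ ha] at this
      exact this
  rw [hU, lintegral_iUnion (fun k => measurableSet_tile _ _), tsum_fintype]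
  intro k l hkl
  refine Set.disjoint_left.2 fun x hk hl => hkl ?_
  simp only [tile, Set.mem_univ_pi, mem_Ico_mul_iff ha] at hk hl
  funext i
  exact Fin.ext ((hk i).2.symm.trans (hl i).2)

/-- All tiles carry the same integral of an `a`-periodic function. -/
lemma lintegral_tile_periodic {a : ℝ} {F : (Fin 3 → ℝ) → ℝ≥0∞}
    (hF : ∀ x i, F (x + Pi.single i a) = F x) (k : Fin 3 → ℕ) :
    ∫⁻ x in tile (fun i => (k i : ℝ) * a) a, F x = ∫⁻ x in tile 0 a, F x := by
  set v : Fin 3 → ℝ := fun i => (k i : ℝ) * a with hv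
  have hper : ∀ x, F (x + v) = F x := by
    have h1 : ∀ i, Function.Periodic F (k i • Pi.single i a) := fun i =>
      Function.Periodic.nsmul (fun x => hF x i) (k i)
    have hvs : v = k 0 • Pi.single 0 a + k 1 • Pi.single 1 a + k 2 • Pi.single 2 a := by
      funext i
      fin_cases i <;> simp [hv]
    rw [hvs]
    exact ((h1 0).add_period (h1 1)).add_period (h1 2)
  have hpre : (fun x => x + v) ⁻¹' tile v a = tile 0 a := by
    ext x
    simp only [tile, Set.mem_preimage, Set.mem_univ_pi, Set.mem_Ico, Pi.add_apply, Pi.zero_apply]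
    refine forall_congr' fun i => ?_
    constructor <;> rintro ⟨h1, h2⟩ <;> constructor <;> linarith
  have h := (measurePreserving_add_right (volume : Measure (Fin 3 → ℝ)) v).restrict_preimage_emb
    (measurableEmbedding_addRight v) (tile v a)
  rw [← h.lintegral_comp_emb (measurableEmbedding_addRight v), hpre]
  simp only [hper]

/-- The product estimate on a cube of side `κ a`, before inserting the bounds on `f`. -/
lemma torus_bound {f : (Fin 3 → ℝ) → ℝ} (hf : ContDiff ℝ 4 f) {p : ℝ} (hp1 : 1 ≤ p)
    (hp2 : p ≤ 2) {κ : ℕ} {a : ℝ} (ha : 0 < a) {G : (Fin 3 → ℝ) → ℝ≥0∞} (hG : Measurable G)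
    (hper : ∀ x i, G (x + Pi.single i a) = G x) :
    ENNReal.ofReal (κ * a) ^ 3 * ∫⁻ x in tile 0 (κ * a), ‖f x‖ₑ ^ p * G x ≤
      64 * (∫⁻ x in tile 0 (κ * a), sobDensity p a f x) * ∫⁻ x in tile 0 (κ * a), G x := by
  set γ := ∫⁻ x in tile 0 a, G x with hγ
  have hγk : ∀ k : Fin 3 → Fin κ, ∫⁻ x in tile (fun i => ((k i : ℕ) : ℝ) * a) a, G x = γ :=
    fun k => lintegral_tile_periodic hper fun i => (k i : ℕ)
  have hGsum : ∫⁻ x in tile 0 (κ * a), G x = (κ : ℝ≥0∞) ^ 3 * γ := by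
    rw [lintegral_tiles ha, Finset.sum_congr rfl fun k _ => hγk k]
    simp
  have hfα : ENNReal.ofReal (κ * a) = κ * ENNReal.ofReal a := by
    rw [ENNReal.ofReal_mul (by positivity), ENNReal.ofReal_natCast]
  have hα : ENNReal.ofReal a ^ 3 ≠ ⊤ := ENNReal.pow_ne_top ENNReal.ofReal_ne_top
  have htile : ∀ c : Fin 3 → ℝ, ENNReal.ofReal a ^ 3 * ∫⁻ x in tile c a, ‖f x‖ₑ ^ p * G x ≤
      64 * (∫⁻ x in tile c a, sobDensity p a f x) * ∫⁻ x in tile c a, G x := by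
    intro c
    rw [← lintegral_const_mul' _ _ hα, ← lintegral_const_mul _ hG]
    refine setLIntegral_mono' (measurableSet_tile c a) fun x hx => ?_
    rw [← mul_assoc]
    exact mul_le_mul_left (tile_sup_bound hf hp1 hp2 c a hx) _
  calc _ = (κ : ℝ≥0∞) ^ 3 *
        (ENNReal.ofReal a ^ 3 * ∫⁻ x in tile 0 (κ * a), ‖f x‖ₑ ^ p * G x) := by
        rw [hfα]; ring
    _ ≤ (κ : ℝ≥0∞) ^ 3 * (64 * (∫⁻ x in tile 0 (κ * a), sobDensity p a f x) * γ) := by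
        refine mul_le_mul_right ?_ _
        rw [lintegral_tiles ha, lintegral_tiles ha, Finset.mul_sum, Finset.mul_sum,
          Finset.sum_mul]
        refine Finset.sum_le_sum fun k _ => ?_
        rw [← hγk k]
        exact htile _
    _ = _ := by rw [hGsum]; ring

/-! ### Passage to the Bochner integral -/

lemma restrict_cube3 :
    (volume : Measure (Fin 3 → ℝ)).restrict cube3 = volume.restrict (tile 0 (2 * Real.pi)) := by
  refine (Measure.restrict_congr_set ?_).symm
  have h := Measure.univ_pi_Ico_ae_eq_Icc (μ := fun _ : Fin 3 => (volume : Measure ℝ))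
    (f := fun _ => 0) (g := fun _ => 2 * Real.pi)
  rw [← Set.pi_univ_Icc, ← volume_pi] at h
  simpa [tile, cube3] using h

/-- If `aζ ≤ 1` and `‖D^k f‖_{L^p} ≤ C ζ^k` for `k ≤ 3`, each of the four terms of `sobDensity`
has integral at most `(C (aζ)^k)^p ≤ C^p`. -/
lemma lintegral_sobDensity_le {f : (Fin 3 → ℝ) → ℝ} (hf : ContDiff ℝ 4 f) {p : ℝ} (hp1 : 1 ≤ p)
    {a ζ C : ℝ} (ha : 0 < a) (hζ : 0 < ζ) (hC : 0 < C) (haζ : a * ζ ≤ 1)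
    (h : ∀ k ≤ 3, (∫ x in cube3, ‖iteratedFDeriv ℝ k f x‖ ^ p) ^ (1 / p) ≤ C * ζ ^ k) :
    ∫⁻ x in cube3, sobDensity p a f x ≤ 4 * ENNReal.ofReal (C ^ p) := by
  have hp0 : 0 < p := by linarith
  have hterm : ∀ k ∈ Finset.range 4,
      ∫⁻ x in cube3, (ENNReal.ofReal a ^ p) ^ k * ‖iteratedFDeriv ℝ k f x‖ₑ ^ p ≤
        ENNReal.ofReal (C ^ p) := by
    intro k hk
    have hk4 : k < 4 := Finset.mem_range.1 hk
    have hcont : Continuous fun x => ‖iteratedFDeriv ℝ k f x‖ ^ p :=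
      (hf.continuous_iteratedFDeriv (m := k) (by exact_mod_cast hk4.le)).norm.rpow_const
        fun _ => Or.inr hp0.le
    have hint : IntegrableOn (fun x => ‖iteratedFDeriv ℝ k f x‖ ^ p) cube3 :=
      hcont.continuousOn.integrableOn_compact (isCompact_univ_pi fun _ => isCompact_Icc)
    have h0 : 0 ≤ ∫ x in cube3, ‖iteratedFDeriv ℝ k f x‖ ^ p :=
      integral_nonneg fun x => by positivity
    have hle : ∫ x in cube3, ‖iteratedFDeriv ℝ k f x‖ ^ p ≤ (C * ζ ^ k) ^ p := by
      have := Real.rpow_le_rpow (by positivity) (h k (by omega)) hp0.le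
      rwa [← Real.rpow_mul h0, one_div_mul_cancel hp0.ne', Real.rpow_one] at this
    have hlin : ∫⁻ x in cube3, ‖iteratedFDeriv ℝ k f x‖ₑ ^ p =
        ENNReal.ofReal (∫ x in cube3, ‖iteratedFDeriv ℝ k f x‖ ^ p) := by
      rw [ofReal_integral_eq_lintegral_ofReal hint (ae_of_all _ fun x => by positivity)]
      refine lintegral_congr fun x => ?_
      rw [← ENNReal.ofReal_rpow_of_nonneg (norm_nonneg _) hp0.le, ofReal_norm]
    rw [lintegral_const_mul _ (measurable_deriv_rpow hf p hk4), hlin,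
      ENNReal.ofReal_rpow_of_nonneg ha.le hp0.le, ← ENNReal.ofReal_pow (by positivity),
      ← ENNReal.ofReal_mul (by positivity)]
    refine ENNReal.ofReal_le_ofReal ?_
    calc (a ^ p) ^ k * ∫ x in cube3, ‖iteratedFDeriv ℝ k f x‖ ^ p
        ≤ (a ^ p) ^ k * (C * ζ ^ k) ^ p := by gcongr
      _ = (a ^ k * (C * ζ ^ k)) ^ p := by
          rw [Real.mul_rpow (x := a ^ k) (by positivity) (by positivity), Real.rpow_pow_comm ha.le]
      _ = ((a * ζ) ^ k * C) ^ p := by rw [mul_pow]; ring_nf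
      _ ≤ (1 * C) ^ p := by
          gcongr
          exact pow_le_one₀ (by positivity) haζ
      _ = C ^ p := by rw [one_mul]
  unfold sobDensity
  rw [lintegral_finsetSum _ fun k hk =>
    (measurable_deriv_rpow hf p (Finset.mem_range.1 hk)).const_mul _]
  refine (Finset.sum_le_sum hterm).trans ?_
  simp

/-- Buckmaster–Vicol, Lemma 7.4: `L^p` stability of products of slowly
varying functions with `(𝕋/κ)³`-periodic fast oscillations, with a universal constant. -/
theorem stmt_6 : ∃ C : ℝ, 0 < C ∧
    ∀ (N κ : ℕ) (ζ : ℝ), 1 ≤ N → 1 ≤ κ → 1 < ζ →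
      2 * Real.pi * Real.sqrt 3 * ζ / (κ : ℝ) ≤ 1/3 →
      ζ ^ 4 * (2 * Real.pi * Real.sqrt 3 * ζ) ^ N / (κ : ℝ) ^ N ≤ 1 →
      ∀ p : ℝ, (p = 1 ∨ p = 2) →
      ∀ (f g : (Fin 3 → ℝ) → ℝ) (C_f : ℝ), 0 < C_f →
        ContDiff ℝ ((N : ℕ∞) + 4) f →
        (∀ x i, f (x + Pi.single i (2 * Real.pi)) = f x) →
        (∀ j ≤ N + 4, (∫ x in cube3, ‖iteratedFDeriv ℝ j f x‖ ^ p) ^ (1/p) ≤ C_f * ζ ^ j) →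
        (∀ x i, g (x + Pi.single i (2 * Real.pi / (κ : ℝ))) = g x) →
        Measurable g →
        IntegrableOn (fun x => |g x| ^ p) cube3 →
        (∫ x in cube3, |f x * g x| ^ p) ^ (1/p) ≤
          C * C_f * (∫ x in cube3, |g x| ^ p) ^ (1/p) := by
  refine ⟨256, by norm_num, ?_⟩
  intro N κ ζ _ hκ hζ hκζ _ p hp f g C_f hC hf' _ hD hgper hg hgint
  have hp1 : 1 ≤ p := by rcases hp with rfl | rfl <;> norm_num
  have hp2 : p ≤ 2 := by rcases hp with rfl | rfl <;> norm_num
  have hp0 : 0 < p := by linarith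
  have hf : ContDiff ℝ 4 f := hf'.of_le le_add_self
  have hκ0 : (0 : ℝ) < κ := by exact_mod_cast hκ
  have hπ := Real.pi_gt_three
  set a := 2 * Real.pi / (κ : ℝ) with ha_def
  have ha : 0 < a := by positivity
  have hκa : κ * a = 2 * Real.pi := by rw [ha_def]; field_simp
  have haζ : a * ζ ≤ 1 := by
    have h3 : 1 ≤ Real.sqrt 3 := Real.one_le_sqrt.2 (by norm_num)
    have h4 : a * ζ * 1 ≤ a * ζ * Real.sqrt 3 := by gcongr
    have h5 : a * ζ * Real.sqrt 3 = 2 * Real.pi * Real.sqrt 3 * ζ / (κ : ℝ) := by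
      rw [ha_def]; ring
    linarith
  set G : (Fin 3 → ℝ) → ℝ≥0∞ := fun x => ENNReal.ofReal (|g x| ^ p) with hG_def
  have hGm : Measurable G := by fun_prop
  have hGper : ∀ x i, G (x + Pi.single i a) = G x := fun x i => by simp only [hG_def, hgper]
  have hT := torus_bound hf hp1 hp2 (κ := κ) ha hGm hGper
  rw [hκa, ← restrict_cube3] at hT
  have hW := lintegral_sobDensity_le hf hp1 ha (by linarith) hC haζ fun k hk => hD k (by omega)
  set I := ∫ x in cube3, |g x| ^ p with hI
  have hI0 : 0 ≤ I := integral_nonneg fun x => by positivity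
  have hGI : ∫⁻ x in cube3, G x = ENNReal.ofReal I :=
    (ofReal_integral_eq_lintegral_ofReal hgint (ae_of_all _ fun x => by positivity)).symm
  have hpt : ∀ x, ENNReal.ofReal (|f x * g x| ^ p) = ‖f x‖ₑ ^ p * G x := fun x => by
    rw [abs_mul, Real.mul_rpow (abs_nonneg _) (abs_nonneg _), ENNReal.ofReal_mul (by positivity),
      ← ENNReal.ofReal_rpow_of_nonneg (abs_nonneg (f x)) hp0.le, ← Real.norm_eq_abs (f x),
      ofReal_norm]
  have hone : 1 ≤ ENNReal.ofReal (2 * Real.pi) ^ 3 :=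
    one_le_pow₀ (ENNReal.one_le_ofReal.2 (by linarith))
  have hlin : ∫⁻ x in cube3, ENNReal.ofReal (|f x * g x| ^ p) ≤
      ENNReal.ofReal (256 * C_f ^ p * I) := by
    simp only [hpt]
    calc ∫⁻ x in cube3, ‖f x‖ₑ ^ p * G x
        ≤ ENNReal.ofReal (2 * Real.pi) ^ 3 * ∫⁻ x in cube3, ‖f x‖ₑ ^ p * G x :=
          le_mul_of_one_le_left' hone
      _ ≤ _ := hT
      _ ≤ 64 * (4 * ENNReal.ofReal (C_f ^ p)) * ENNReal.ofReal I := by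
          rw [hGI]; gcongr
      _ = ENNReal.ofReal (256 * C_f ^ p * I) := by
          rw [ENNReal.ofReal_mul (by positivity), ENNReal.ofReal_mul (by norm_num),
            ← mul_assoc]
          norm_num
  have hfm : Measurable f := hf.continuous.measurable
  have hreal : ∫ x in cube3, |f x * g x| ^ p ≤ 256 * C_f ^ p * I := by
    rw [integral_eq_lintegral_of_nonneg_ae (ae_of_all _ fun x => by positivity)
      (by fun_prop : Measurable fun x => |f x * g x| ^ p).aestronglyMeasurable]
    exact ENNReal.toReal_le_of_le_ofReal (by positivity) hlin
  have h256 : (256 : ℝ) ≤ 256 ^ p := by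
    simpa using Real.rpow_le_rpow_of_exponent_le (by norm_num : (1 : ℝ) ≤ 256) hp1
  have hfinal : ∫ x in cube3, |f x * g x| ^ p ≤ (256 * C_f) ^ p * I := by
    rw [Real.mul_rpow (by norm_num) hC.le]
    refine hreal.trans ?_
    gcongr
  calc (∫ x in cube3, |f x * g x| ^ p) ^ (1 / p) ≤ ((256 * C_f) ^ p * I) ^ (1 / p) :=
        Real.rpow_le_rpow (integral_nonneg fun x => by positivity) hfinal (by positivity)
    _ = 256 * C_f * I ^ (1 / p) := by
        rw [Real.mul_rpow (by positivity) hI0, ← Real.rpow_mul (by positivity),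
          mul_one_div_cancel hp0.ne', Real.rpow_one]
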